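/- Let 𝒳 and 𝒴 be finite nonempty types, let d be a positive natural number, and let σ : 𝒳 → 𝒴 → M_d(ℂ) be a family of positive semidefinite matrices. Define P_guess(XY|E) := sup over all POVMs M : 𝒳 × 𝒴 → M_d(ℂ) of Σ_{x,y} Re Tr(M(x,y) · σ x y), and define P_guess(X|YE) := Σ_y [ sup over all POVMs N : 𝒳 → M_d(ℂ) of Σ_x Re Tr(N x · σ x y) ]. Then P_guess(XY|E) ≥ P_guess(X|YE) / |𝒴|. -/

import Mathlib

/-!
For each `y` let `N y` be a nearly optimal POVM for guessing `X` from `E` given `Y = y`. Choosing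
`y` uniformly at random and then measuring `N y` is the POVM `M (x, y) = N y x / |𝒴|`, whose
success probability for the pair `(X, Y)` is the average of those of the `N y`. Since suprema of
unbounded or empty sets of reals are junk, one also needs that POVMs exist and that their success
probability is bounded by `∑ x y, Tr (σ x y)`, because `M k ≤ 1`.
-/

open Matrix ComplexOrder

/-- A POVM on `ℂᵈ` indexed by a finite type `K`: a family of positive
semidefinite matrices summing to the identity. -/
def IsPOVM {K n : Type*} [Fintype K] [Fintype n] [DecidableEq n]
    (M : K → Matrix n n ℂ) : Prop :=
  (∀ k, (M k).PosSemidef) ∧ ∑ k, M k = 1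

open scoped MatrixOrder in
/-- Via a factorization `A = Bᴴ * B` and cyclicity, `Tr (A * S)` is the trace of the positive
semidefinite matrix `B * S * Bᴴ`. -/
lemma re_trace_mul_nonneg {n : Type*} [Fintype n] [DecidableEq n] {A S : Matrix n n ℂ}
    (hA : A.PosSemidef) (hS : S.PosSemidef) : 0 ≤ ((A * S).trace).re := by
  obtain ⟨B, rfl⟩ := CStarAlgebra.nonneg_iff_eq_star_mul_self.mp hA.nonneg
  rw [Matrix.star_eq_conjTranspose, Matrix.mul_assoc, Matrix.trace_mul_comm]
  exact (Complex.le_def.mp (hS.mul_mul_conjTranspose_same B).trace_nonneg).1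

lemma IsPOVM.re_trace_mul_le {K n : Type*} [Fintype K] [Fintype n] [DecidableEq n]
    {M : K → Matrix n n ℂ} (hM : IsPOVM M) (k : K) {S : Matrix n n ℂ} (hS : S.PosSemidef) :
    ((M k * S).trace).re ≤ (S.trace).re := by
  have h : ∑ j, ((M j * S).trace).re = (S.trace).re := by
    rw [← Complex.re_sum, ← Matrix.trace_sum, ← Finset.sum_mul, hM.2, one_mul]
  rw [← h]
  exact Finset.single_le_sum (f := fun j => ((M j * S).trace).re)
    (fun j _ => re_trace_mul_nonneg (hM.1 j) hS) (Finset.mem_univ k)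

lemma exists_isPOVM (K n : Type*) [Fintype K] [Nonempty K] [Fintype n] [DecidableEq n] :
    ∃ M : K → Matrix n n ℂ, IsPOVM M := by
  classical
  obtain ⟨k₀⟩ := ‹Nonempty K›
  refine ⟨fun k => if k = k₀ then 1 else 0, fun k => ?_, by simp⟩
  dsimp only
  split_ifs
  · exact Matrix.PosSemidef.one
  · exact Matrix.PosSemidef.zero

/-- Drawing `y` uniformly and then measuring with `N y` is a POVM with outcomes `(x, y)`. -/
lemma isPOVM_uniform_mix {K L n : Type*} [Fintype K] [Fintype L] [Nonempty L] [Fintype n]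
    [DecidableEq n] {N : L → K → Matrix n n ℂ} (hN : ∀ y, IsPOVM (N y)) :
    IsPOVM (fun p : K × L => ((Fintype.card L : ℝ)⁻¹) • N p.2 p.1) := by
  refine ⟨fun p => ((hN p.2).1 p.1).smul (by positivity), ?_⟩
  have hc : (Fintype.card L : ℝ) ≠ 0 := by positivity
  rw [← Finset.smul_sum, Fintype.sum_prod_type_right]
  simp only [(hN _).2, Finset.sum_const, Finset.card_univ]
  rw [← Nat.cast_smul_eq_nsmul ℝ, smul_smul, inv_mul_cancel₀ hc, one_smul]

/-- Guessing-probability form of the min-entropy chain rule: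
`P_guess(XY|E) ≥ P_guess(X|YE) / |𝒴|` for any family of positive semidefinite
matrices `σ : 𝒳 → 𝒴 → M_d(ℂ)` encoding a subnormalized ccq-state. -/
theorem stmt_15 (𝒳 𝒴 : Type) [Fintype 𝒳] [Fintype 𝒴] [Nonempty 𝒳] [Nonempty 𝒴]
    (d : ℕ) (hd : 0 < d)
    (σ : 𝒳 → 𝒴 → Matrix (Fin d) (Fin d) ℂ) (hσ : ∀ x y, (σ x y).PosSemidef) :
    sSup {s : ℝ | ∃ M : 𝒳 × 𝒴 → Matrix (Fin d) (Fin d) ℂ, IsPOVM M ∧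
        s = ∑ x : 𝒳, ∑ y : 𝒴, ((M (x, y) * σ x y).trace).re}
      ≥ (∑ y : 𝒴, sSup {s : ℝ | ∃ N : 𝒳 → Matrix (Fin d) (Fin d) ℂ, IsPOVM N ∧
          s = ∑ x : 𝒳, ((N x * σ x y).trace).re}) / (Fintype.card 𝒴 : ℝ) := by
  have hc : (0 : ℝ) < Fintype.card 𝒴 := by exact_mod_cast Fintype.card_pos
  have bdd : BddAbove {s : ℝ | ∃ M : 𝒳 × 𝒴 → Matrix (Fin d) (Fin d) ℂ, IsPOVM M ∧
        s = ∑ x : 𝒳, ∑ y : 𝒴, ((M (x, y) * σ x y).trace).re} := by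
    refine ⟨∑ x : 𝒳, ∑ y : 𝒴, ((σ x y).trace).re, ?_⟩
    rintro s ⟨M, hM, rfl⟩
    exact Finset.sum_le_sum fun x _ => Finset.sum_le_sum fun y _ =>
      hM.re_trace_mul_le (x, y) (hσ x y)
  rw [ge_iff_le, div_le_iff₀ hc]
  refine le_of_forall_pos_le_add fun ε hε => ?_
  -- For each `y`, a POVM within `ε / |𝒴|` of the optimum.
  have near : ∀ y, ∃ N : 𝒳 → Matrix (Fin d) (Fin d) ℂ, IsPOVM N ∧
      sSup {s : ℝ | ∃ N : 𝒳 → Matrix (Fin d) (Fin d) ℂ, IsPOVM N ∧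
          s = ∑ x : 𝒳, ((N x * σ x y).trace).re} ≤
        (∑ x : 𝒳, ((N x * σ x y).trace).re) + ε / Fintype.card 𝒴 := by
    intro y
    obtain ⟨N₀, hN₀⟩ := exists_isPOVM 𝒳 (Fin d)
    obtain ⟨s, ⟨N, hN, rfl⟩, hlt⟩ :=
      exists_lt_of_lt_csSup (s := {s : ℝ | ∃ N : 𝒳 → Matrix (Fin d) (Fin d) ℂ, IsPOVM N ∧
          s = ∑ x : 𝒳, ((N x * σ x y).trace).re}) ⟨_, N₀, hN₀, rfl⟩
        (sub_lt_self _ (div_pos hε hc))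
    exact ⟨N, hN, by linarith⟩
  choose N hN hle using near
  have hmem := le_csSup bdd ⟨_, isPOVM_uniform_mix hN, rfl⟩
  have hval : ∑ x : 𝒳, ∑ y : 𝒴,
      ((((Fintype.card 𝒴 : ℝ)⁻¹ • N y x) * σ x y).trace).re =
      (∑ y : 𝒴, ∑ x : 𝒳, ((N y x * σ x y).trace).re) / Fintype.card 𝒴 := by
    rw [Finset.sum_comm, div_eq_inv_mul, Finset.mul_sum]
    refine Finset.sum_congr rfl fun y _ => ?_
    rw [Finset.mul_sum]
    refine Finset.sum_congr rfl fun x _ => ?_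
    rw [Matrix.smul_mul, Matrix.trace_smul, Complex.smul_re, smul_eq_mul]
  dsimp only at hmem
  rw [hval, div_le_iff₀ hc] at hmem
  refine (Finset.sum_le_sum fun y _ => hle y).trans ?_
  rw [Finset.sum_add_distrib, Finset.sum_const, Finset.card_univ, nsmul_eq_mul,
    mul_div_cancel₀ _ hc.ne']
  linarith
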